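/- There exists exactly one function e : Stream' ℕ → Stream' ℕ satisfying the corecursive equation e xs = SCons (2 ^ head xs) ((tail xs) ⊗ (e xs)) for all streams xs, where ⊗ is the shuffle product (binomial convolution). -/

import Mathlib

open Stream'

/-- Shuffle product of streams (binomial convolution). -/
def sshuffle (xs ys : Stream' ℕ) : Stream' ℕ :=
  fun n => ∑ k ∈ Finset.range (n + 1), n.choose k * xs.get k * ys.get (n - k)

infixl:70 " ⊗ " => sshuffle

/-- The solution, by well-founded recursion on the index. -/
def eAux (xs : Stream' ℕ) : ℕ → ℕ
  | 0 => 2 ^ xs.head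
  | n + 1 => ∑ k ∈ Finset.range (n + 1), n.choose k * xs.tail.get k * eAux xs (n - k)
termination_by n => n
decreasing_by omega

theorem stmt_10 :
    ∃! e : Stream' ℕ → Stream' ℕ,
      ∀ xs, e xs = Stream'.cons (2 ^ xs.head) (xs.tail ⊗ e xs) := by
  refine ⟨fun xs => eAux xs, ?_, ?_⟩
  · intro xs
    funext n
    cases n with
    | zero => exact eAux.eq_1 xs
    | succ n => exact eAux.eq_2 xs n
  · intro f hf
    funext xs
    have key : ∀ n, f xs n = eAux xs n := by
      intro n
      induction n using Nat.strong_induction_on with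
      | _ n ih =>
        cases n with
        | zero =>
          rw [eAux.eq_1]
          exact congrFun (hf xs) 0
        | succ n =>
          rw [eAux.eq_2]
          refine (congrFun (hf xs) (n + 1)).trans ?_
          change ∑ k ∈ Finset.range (n + 1), n.choose k * xs.tail.get k * f xs (n - k) = _
          refine Finset.sum_congr rfl fun k _ => ?_
          rw [ih (n - k) (by omega)]
    exact funext key
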